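/- Let 1 ≤ p < ∞, 0 < s < 1, 0 < γ < 1, E ⊆ R^N open and bounded, and F ⊆ E compact with F ⋐ B_R(x_0) for some ball, satisfying cap_{s,p}(F; B_R(x_0)) = 0. Then W̃^{s,p}_0(E \ F) = W̃^{s,p}_0(E); in particular λ^s_{p,q}(E) = λ^s_{p,q}(E \ F) for every admissible exponent q. -/

import Mathlib

open MeasureTheory Metric Filter
open scoped ENNReal

noncomputable section

abbrev Euc (N : ℕ) := EuclideanSpace ℝ (Fin N)

/-- The (p-th power of the) Gagliardo–Slobodeckii seminorm on `ℝ^N`. -/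
def gag (N : ℕ) (p s : ℝ) (u : Euc N → ℝ) : ℝ :=
  ∫ z : Euc N × Euc N, |u z.1 - u z.2| ^ p / ‖z.1 - z.2‖ ^ ((N : ℝ) + s * p)

/-- `u ∈ C^∞_0(Ω)`: smooth with compact support contained in `Ω`. -/
def TestOn {N : ℕ} (Ω : Set (Euc N)) (u : Euc N → ℝ) : Prop :=
  ContDiff ℝ (⊤ : ℕ∞) u ∧ HasCompactSupport u ∧ tsupport u ⊆ Ω

/-- The fractional principal frequency `λ^s_{p,q}(Ω)`. -/
def lam (N : ℕ) (p q s : ℝ) (Ω : Set (Euc N)) : ℝ :=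
  sInf { c | ∃ u : Euc N → ℝ, TestOn Ω u ∧ (∫ x in Ω, |u x| ^ q) = 1 ∧ c = gag N p s u }

/-- The homogeneous relative `(s,p)`-capacity of `A` in `E`. -/
def fcap (N : ℕ) (p s : ℝ) (A E : Set (Euc N)) : ℝ :=
  sInf { c | ∃ φ : Euc N → ℝ, TestOn E φ ∧ (∀ x ∈ A, 1 ≤ φ x) ∧ c = gag N p s φ }

/-- The fractional `s`-perimeter of a set `A ⊆ ℝ^N`. -/
def sPer (N : ℕ) (s : ℝ) (A : Set (Euc N)) : ℝ :=
  ∫ z : Euc N × Euc N,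
    |A.indicator (fun _ => (1 : ℝ)) z.1 - A.indicator (fun _ => (1 : ℝ)) z.2| /
      ‖z.1 - z.2‖ ^ ((N : ℝ) + s)

/-- An open set with smooth boundary, described as a regular sublevel set of a smooth function. -/
def SmoothBdry {N : ℕ} (O : Set (Euc N)) : Prop :=
  ∃ f : Euc N → ℝ, ContDiff ℝ (⊤ : ℕ∞) f ∧ O = {x | f x < 0} ∧ ∀ x, f x = 0 → fderiv ℝ f x ≠ 0

/-- The sharp constant in the fractional Sobolev inequality. -/
def sobConst (N : ℕ) (p s : ℝ) : ℝ :=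
  sSup {c | ∃ u : Euc N → ℝ, TestOn Set.univ u ∧ gag N p s u = 1 ∧
    c = (∫ x, |u x| ^ ((N : ℝ) * p / (N - s * p))) ^ (((N : ℝ) - s * p) / N)}

/-- Membership in `W̃^{s,p}_0(Ω)`, the closure of `C^∞_0(Ω)` in `W^{s,p}(ℝ^N)`. -/
def MemW0 (N : ℕ) (p s : ℝ) (Ω : Set (Euc N)) (V : Euc N → ℝ) : Prop :=
  ∃ u : ℕ → Euc N → ℝ, (∀ n, TestOn Ω (u n)) ∧
    Filter.Tendsto (fun n => (∫ x, |u n x - V x| ^ p) + gag N p s (fun x => u n x - V x))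
      Filter.atTop (nhds 0)

/-- The relative (local) `p`-capacity of `A` in `E`. -/
def pcap (N : ℕ) (p : ℝ) (A E : Set (Euc N)) : ℝ :=
  sInf { c | ∃ φ : Euc N → ℝ, TestOn E φ ∧ (∀ x ∈ A, 1 ≤ φ x) ∧
    c = ∫ x in E, ‖fderiv ℝ φ x‖ ^ p }

/-- The sharp constant in the local `p`-Poincaré inequality on `E`. -/
def lamLoc (N : ℕ) (p : ℝ) (E : Set (Euc N)) : ℝ :=
  sInf { c | ∃ u : Euc N → ℝ, TestOn E u ∧ (∫ x in E, |u x| ^ p) = 1 ∧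
    c = ∫ x in E, ‖fderiv ℝ u x‖ ^ p }

/-- The compact set `A ⊆ closure (B_r(x0))` is `(s,p,γ)`-negligible. -/
def Negligible (N : ℕ) (p s γ : ℝ) (x0 : Euc N) (r : ℝ) (A : Set (Euc N)) : Prop :=
  fcap N p s A (ball x0 (2 * r)) ≤ γ * fcap N p s (closedBall x0 r) (ball x0 (2 * r))

/-- The fractional `(p,γ)`-capacitary inradius of order `s` of `Ω` (valued in `ℝ≥0∞`). -/
def capInr (N : ℕ) (p s γ : ℝ) (Ω : Set (Euc N)) : ℝ≥0∞ :=
  sSup {R | ∃ r : ℝ, 0 < r ∧ R = ENNReal.ofReal r ∧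
    ∃ x0 : Euc N, Negligible N p s γ x0 r (closedBall x0 r \ Ω)}

end


section Abstract
open Topology

lemma add_rpow_le_two {p a b : ℝ} (hp : 1 ≤ p) (ha : 0 ≤ a) (hb : 0 ≤ b) :
    (a + b) ^ p ≤ 2 ^ p * (a ^ p + b ^ p) := by
  have hp0 : 0 ≤ p := by linarith
  have h1 : (a + b) ^ p ≤ (2 * max a b) ^ p := by
    apply Real.rpow_le_rpow (by positivity) _ hp0
    linarith [le_max_left a b, le_max_right a b]
  rw [Real.mul_rpow (by norm_num) (by positivity)] at h1
  refine h1.trans ?_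
  gcongr
  rcases le_total a b with h | h
  · rw [max_eq_right h]; linarith [Real.rpow_nonneg ha p]
  · rw [max_eq_left h]; linarith [Real.rpow_nonneg hb p]

lemma aemeas_of_rpow {α : Type*} [MeasurableSpace α] {μ : Measure α} {p : ℝ} (hp : 1 ≤ p)
    {h : α → ℝ} (hi : Integrable (fun x => |h x| ^ p) μ) : AEMeasurable (fun x => |h x|) μ := by
  have h1 := (hi.aestronglyMeasurable.aemeasurable).pow_const (1 / p)
  refine h1.congr (Eventually.of_forall fun x => ?_)
  show (|h x| ^ p) ^ (1 / p) = |h x|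
  rw [← Real.rpow_mul (abs_nonneg _), mul_one_div_cancel (by linarith), Real.rpow_one]

lemma subseq_ae {α : Type*} [MeasurableSpace α] {μ : Measure α} {p : ℝ} (hp : 1 ≤ p)
    {h : ℕ → α → ℝ} (hi : ∀ k, Integrable (fun x => |h k x| ^ p) μ)
    (hl : Tendsto (fun k => ∫ x, |h k x| ^ p ∂μ) atTop (𝓝 0)) :
    ∃ ns : ℕ → ℕ, StrictMono ns ∧ ∀ᵐ x ∂μ, Tendsto (fun i => h (ns i) x) atTop (𝓝 0) := by
  have h1 : TendstoInMeasure μ (fun k x => |h k x| ^ p) atTop (fun _ => (0 : ℝ)) := by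
    apply tendstoInMeasure_of_tendsto_eLpNorm (p := 1) one_ne_zero
      (fun k => (hi k).aestronglyMeasurable) aestronglyMeasurable_const
    have h2 : Tendsto (fun k => ENNReal.ofReal (∫ x, |h k x| ^ p ∂μ)) atTop (𝓝 0) := by
      have := ENNReal.tendsto_ofReal hl
      simpa using this
    refine h2.congr fun k => ?_
    rw [eLpNorm_one_eq_lintegral_enorm, ofReal_integral_eq_lintegral_ofReal (hi k)
      (Eventually.of_forall fun x => Real.rpow_nonneg (abs_nonneg _) _)]
    refine lintegral_congr fun x => ?_
    simp only [Pi.sub_apply, sub_zero]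
    rw [Real.enorm_eq_ofReal (Real.rpow_nonneg (abs_nonneg _) _)]
  obtain ⟨ns, hns, hae⟩ := h1.exists_seq_tendsto_ae
  refine ⟨ns, hns, ?_⟩
  filter_upwards [hae] with x hx
  rw [tendsto_zero_iff_abs_tendsto_zero]
  have h3 := hx.rpow_const (p := 1 / p) (Or.inr (by positivity))
  rw [Real.zero_rpow (by positivity)] at h3
  refine h3.congr fun k => ?_
  show (|h (ns k) x| ^ p) ^ (1 / p) = |h (ns k) x|
  rw [← Real.rpow_mul (abs_nonneg _), mul_one_div_cancel (by linarith), Real.rpow_one]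

lemma minkowski {α : Type*} [MeasurableSpace α] {μ : Measure α} {p : ℝ} (hp : 1 ≤ p)
    {a b c : α → ℝ} (hc : ∀ x, |c x| ≤ |a x| + |b x|)
    (ha : Integrable (fun x => |a x| ^ p) μ) (hb : Integrable (fun x => |b x| ^ p) μ)
    (hci : Integrable (fun x => |c x| ^ p) μ) :
    ∫ x, |c x| ^ p ∂μ ≤
      ((∫ x, |a x| ^ p ∂μ) ^ (1 / p) + (∫ x, |b x| ^ p ∂μ) ^ (1 / p)) ^ p := by
  have hp0 : 0 < p := by linarith
  have nn : ∀ f : α → ℝ, 0 ≤ ∫ x, |f x| ^ p ∂μ := fun f =>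
    integral_nonneg fun x => Real.rpow_nonneg (abs_nonneg _) _
  have key : ∀ f : α → ℝ, Integrable (fun x => |f x| ^ p) μ →
      ∫⁻ x, (ENNReal.ofReal |f x|) ^ p ∂μ = ENNReal.ofReal (∫ x, |f x| ^ p ∂μ) := by
    intro f hf
    rw [ofReal_integral_eq_lintegral_ofReal hf
      (Eventually.of_forall fun x => Real.rpow_nonneg (abs_nonneg _) _)]
    refine lintegral_congr fun x => ?_
    rw [ENNReal.ofReal_rpow_of_nonneg (abs_nonneg _) hp0.le]
  have h1 := ENNReal.lintegral_Lp_add_le (aemeas_of_rpow hp ha).ennreal_ofReal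
    (aemeas_of_rpow hp hb).ennreal_ofReal hp
  rw [key a ha, key b hb] at h1
  have h2 : (∫⁻ x, (ENNReal.ofReal |c x|) ^ p ∂μ) ^ (1 / p) ≤
      ENNReal.ofReal (∫ x, |a x| ^ p ∂μ) ^ (1 / p) +
      ENNReal.ofReal (∫ x, |b x| ^ p ∂μ) ^ (1 / p) := by
    refine le_trans ?_ h1
    gcongr with x
    simp only [Pi.add_apply]
    rw [← ENNReal.ofReal_add (abs_nonneg _) (abs_nonneg _)]
    exact ENNReal.ofReal_le_ofReal (hc x)
  have q0 : 0 ≤ 1 / p := by positivity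
  rw [key c hci, ENNReal.ofReal_rpow_of_nonneg (nn _) q0, ENNReal.ofReal_rpow_of_nonneg (nn _) q0,
    ENNReal.ofReal_rpow_of_nonneg (nn _) q0,
    ← ENNReal.ofReal_add (Real.rpow_nonneg (nn _) _) (Real.rpow_nonneg (nn _) _),
    ENNReal.ofReal_le_ofReal_iff (add_nonneg (Real.rpow_nonneg (nn _) _) (Real.rpow_nonneg (nn _) _))] at h2
  have h3 := Real.rpow_le_rpow (Real.rpow_nonneg (nn _) _) h2 hp0.le
  rwa [← Real.rpow_mul (nn _), one_div_mul_cancel hp0.ne', Real.rpow_one] at h3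

lemma usc_lem {α : Type*} [MeasurableSpace α] {μ : Measure α} {p : ℝ} (hp : 1 ≤ p)
    (f : ℕ → α → ℝ) (f0 g : α → ℝ)
    (hi : ∀ k, Integrable (fun x => |f k x - f0 x| ^ p) μ)
    (hl : Tendsto (fun k => ∫ x, |f k x - f0 x| ^ p ∂μ) atTop (𝓝 0)) (ε : ℝ) (hε : 0 < ε) :
    ∀ᶠ k in atTop, ∫ x, |f k x - g x| ^ p ∂μ ≤ ∫ x, |f0 x - g x| ^ p ∂μ + ε := by
  have hp0 : 0 < p := by linarith
  have nn : ∀ f : α → ℝ, 0 ≤ ∫ x, |f x| ^ p ∂μ := fun f =>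
    integral_nonneg fun x => Real.rpow_nonneg (abs_nonneg _) _
  by_cases h0 : Integrable (fun x => |f0 x - g x| ^ p) μ
  · set A := ∫ x, |f0 x - g x| ^ p ∂μ with hA
    have hA0 : 0 ≤ A := nn _
    have h1 : Tendsto (fun k => ((∫ x, |f k x - f0 x| ^ p ∂μ) ^ (1 / p) + A ^ (1 / p)) ^ p) atTop
        (𝓝 A) := by
      have h2 := ((hl.rpow_const (p := 1 / p) (Or.inr (by positivity))).add_const
        (A ^ (1 / p))).rpow_const (p := p) (Or.inr hp0.le)
      rw [Real.zero_rpow (by positivity), zero_add, ← Real.rpow_mul hA0,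
        one_div_mul_cancel hp0.ne', Real.rpow_one] at h2
      exact h2
    filter_upwards [h1.eventually (gt_mem_nhds (by linarith : A < A + ε))] with k hk
    by_cases hik : Integrable (fun x => |f k x - g x| ^ p) μ
    · refine (minkowski hp (fun x => ?_) (hi k) h0 hik).trans hk.le
      exact abs_sub_le _ _ _
    · rw [integral_undef hik]; linarith
  · have : ∀ᶠ k in atTop, ¬ Integrable (fun x => |f k x - g x| ^ p) μ := by
      by_contra hcon
      rw [not_eventually] at hcon
      simp only [not_not] at hcon
      obtain ⟨ns, hns, hns'⟩ := extraction_of_frequently_atTop hcon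
      obtain ⟨ms, hms, hae⟩ := subseq_ae hp (h := fun k x => f (ns k) x - f0 x)
        (fun k => hi (ns k)) (hl.comp hns.tendsto_atTop)
      apply h0
      have hm : AEMeasurable (fun x => |f0 x - g x|) μ := by
        refine aemeasurable_of_tendsto_metrizable_ae atTop
          (f := fun k x => |f (ns (ms k)) x - g x|) (fun k => aemeas_of_rpow hp (hns' (ms k))) ?_
        filter_upwards [hae] with x hx
        have : Tendsto (fun i => (f (ns (ms i)) x - f0 x) + (f0 x - g x)) atTop
            (𝓝 (0 + (f0 x - g x))) := hx.add_const _
        simp only [sub_add_sub_cancel, zero_add] at this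
        exact this.abs
      refine (((hns' 0).add (hi (ns 0))).const_mul (2 ^ p)).mono'
        (hm.pow_const p).aestronglyMeasurable (Eventually.of_forall fun x => ?_)
      rw [Real.norm_of_nonneg (Real.rpow_nonneg (abs_nonneg _) _)]
      refine le_trans ?_ (add_rpow_le_two hp (abs_nonneg _) (abs_nonneg _))
      apply Real.rpow_le_rpow (abs_nonneg _) _ hp0.le
      have := abs_sub_le (f0 x) (f (ns 0) x) (g x)
      rw [abs_sub_comm (f0 x) (f (ns 0) x)] at this
      linarith
    filter_upwards [this] with k hk
    rw [integral_undef hk, integral_undef h0]; linarith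

end Abstract

section Concrete
open Topology Set

lemma kernel_1d (N : ℕ) (hN : 0 < N) (p s L M : ℝ) (hp : 1 ≤ p) (hs0 : 0 < s) (hs1 : s < 1)
    (hL : 0 ≤ L) (hM : 0 ≤ M) :
    IntegrableOn (fun r : ℝ => r ^ (N - 1) • ((min (L * r) M) ^ p / r ^ ((N : ℝ) + s * p)))
      (Ioi 0) := by
  have hp0 : 0 < p := by linarith
  have hsp : 0 < s * p := by positivity
  have hmeas : Measurable
      (fun r : ℝ => r ^ (N - 1) • ((min (L * r) M) ^ p / r ^ ((N : ℝ) + s * p))) := by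
    simp only [smul_eq_mul]
    fun_prop
  have hr : ∀ r : ℝ, 0 < r → ∀ a : ℝ, r ^ (N - 1) • (a / r ^ ((N : ℝ) + s * p)) =
      a * r ^ (-1 - s * p) := by
    intro r hr a
    rw [smul_eq_mul, ← Real.rpow_natCast, Nat.cast_sub hN, mul_div_left_comm,
      ← Real.rpow_sub hr]
    congr 2
    push_cast; ring
  rw [← Ioc_union_Ioi_eq_Ioi (zero_le_one' ℝ), integrableOn_union]
  constructor
  · have h1 : IntegrableOn (fun r : ℝ => L ^ p * r ^ (p - 1 - s * p)) (Ioc 0 1) := by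
      apply Integrable.const_mul
      have := intervalIntegral.intervalIntegrable_rpow' (a := 0) (b := 1)
        (r := p - 1 - s * p) (by nlinarith)
      rwa [intervalIntegrable_iff_integrableOn_Ioc_of_le zero_le_one] at this
    refine Integrable.mono' h1 hmeas.aestronglyMeasurable ?_
    filter_upwards [ae_restrict_mem measurableSet_Ioc] with r hr'
    have hr0 : 0 < r := hr'.1
    rw [hr r hr0, Real.norm_of_nonneg (by positivity)]
    calc (min (L * r) M) ^ p * r ^ (-1 - s * p) ≤ (L * r) ^ p * r ^ (-1 - s * p) := by
          gcongr
          exact min_le_left _ _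
      _ = L ^ p * r ^ (p - 1 - s * p) := by
          rw [Real.mul_rpow hL hr0.le, mul_assoc, ← Real.rpow_add hr0]
          congr 2; ring
  · have h1 : IntegrableOn (fun r : ℝ => M ^ p * r ^ (-1 - s * p)) (Ioi 1) := by
      apply Integrable.const_mul
      exact integrableOn_Ioi_rpow_of_lt (by linarith) zero_lt_one
    refine Integrable.mono' h1 hmeas.aestronglyMeasurable ?_
    filter_upwards [ae_restrict_mem measurableSet_Ioi] with r hr'
    have hr0 : 0 < r := lt_trans zero_lt_one hr'
    rw [hr r hr0, Real.norm_of_nonneg (by positivity)]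
    gcongr
    exact min_le_right _ _

lemma kernel_int (N : ℕ) (hN : 0 < N) (p s L M : ℝ) (hp : 1 ≤ p) (hs0 : 0 < s) (hs1 : s < 1)
    (hL : 0 ≤ L) (hM : 0 ≤ M) :
    Integrable (fun h : Euc N => (min (L * ‖h‖) M) ^ p / ‖h‖ ^ ((N : ℝ) + s * p)) := by
  have : Nonempty (Fin N) := ⟨⟨0, hN⟩⟩
  have := (integrable_fun_norm_addHaar (volume : Measure (Euc N))
    (f := fun r : ℝ => (min (L * r) M) ^ p / r ^ ((N : ℝ) + s * p))).2 (by
      rw [finrank_euclideanSpace_fin]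
      exact kernel_1d N hN p s L M hp hs0 hs1 hL hM)
  exact this

lemma gag_int (N : ℕ) (hN : 0 < N) (p s : ℝ) (hp : 1 ≤ p) (hs0 : 0 < s) (hs1 : s < 1)
    (u : Euc N → ℝ) (hu : ContDiff ℝ (⊤ : ℕ∞) u) (hc : HasCompactSupport u) :
    Integrable (fun z : Euc N × Euc N =>
      |u z.1 - u z.2| ^ p / ‖z.1 - z.2‖ ^ ((N : ℝ) + s * p)) := by
  have hp0 : 0 < p := by linarith
  obtain ⟨L, hL⟩ := hu.lipschitzWith_of_hasCompactSupport hc (by simp)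
  obtain ⟨M, hM⟩ := hc.exists_bound_of_continuous hu.continuous
  have hM0 : 0 ≤ M := (norm_nonneg _).trans (hM 0)
  have hk := kernel_int N hN p s L (2 * M) hp hs0 hs1 L.2 (by positivity)
  set k : Euc N → ℝ := fun h => (min (L * ‖h‖) (2 * M)) ^ p / ‖h‖ ^ ((N : ℝ) + s * p) with hkdef
  have hk0 : ∀ h, 0 ≤ k h := fun h => by simp only [hkdef]; positivity
  have hS : Integrable ((tsupport u).indicator (fun _ => (1 : ℝ))) (volume : Measure (Euc N)) := by
    rw [integrable_indicator_iff hc.isCompact.measurableSet]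
    exact integrableOn_const hc.isCompact.measure_lt_top.ne
  have hsymm : ∀ x y : Euc N, k (x - y) = k (y - x) := fun x y => by
    simp only [hkdef, norm_sub_rev x y]
  have h1 : Integrable (fun z : Euc N × Euc N =>
      (tsupport u).indicator (fun _ => (1 : ℝ)) z.1 * k (z.1 - z.2)) := by
    have := (measurePreserving_prod_sub (volume : Measure (Euc N))
      (volume : Measure (Euc N))).integrable_comp_of_integrable (hS.mul_prod hk)
    refine this.congr (Eventually.of_forall fun z => ?_)
    simp only [Function.comp]
    rw [hsymm z.1 z.2]
  have h2 : Integrable (fun z : Euc N × Euc N =>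
      (tsupport u).indicator (fun _ => (1 : ℝ)) z.2 * k (z.1 - z.2)) := by
    refine h1.swap.congr (Eventually.of_forall fun z => ?_)
    simp only [Function.comp, Prod.swap]
    rw [hsymm z.1 z.2]
  refine (h1.add h2).mono' ?_ (Eventually.of_forall fun z => ?_)
  · have := hu.continuous
    exact Measurable.aestronglyMeasurable (by fun_prop)
  · rw [Real.norm_of_nonneg (by positivity)]
    have hle : |u z.1 - u z.2| ^ p / ‖z.1 - z.2‖ ^ ((N : ℝ) + s * p) ≤ k (z.1 - z.2) := by
      simp only [hkdef]
      gcongr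
      apply le_min
      · have := hL.dist_le_mul z.1 z.2
        rwa [Real.dist_eq, dist_eq_norm] at this
      · have a1 := hM z.1
        have a2 := hM z.2
        rw [Real.norm_eq_abs] at a1 a2
        linarith [abs_sub (u z.1) (u z.2)]
    have hk' := hk0 (z.1 - z.2)
    simp only [Pi.add_apply]
    by_cases e1 : z.1 ∈ tsupport u
    · simp only [indicator_of_mem e1, one_mul]
      have : 0 ≤ (tsupport u).indicator (fun _ => (1 : ℝ)) z.2 :=
        indicator_nonneg (fun _ _ => zero_le_one) _
      nlinarith
    · by_cases e2 : z.2 ∈ tsupport u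
      · simp only [indicator_of_mem e2, indicator_of_notMem e1, one_mul, zero_mul, zero_add]
        exact hle
      · rw [image_eq_zero_of_notMem_tsupport e1, image_eq_zero_of_notMem_tsupport e2]
        simp [indicator_of_notMem e1, indicator_of_notMem e2, Real.zero_rpow hp0.ne']

lemma rpow_int {N : ℕ} {q : ℝ} (hq : 1 ≤ q) {u : Euc N → ℝ} (hu : Continuous u)
    (hc : HasCompactSupport u) : Integrable (fun x => |u x| ^ q) := by
  have hq0 : 0 < q := by linarith
  apply Continuous.integrable_of_hasCompactSupport
  · exact hu.abs.rpow_const fun x => Or.inr hq0.le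
  · exact hc.comp_left (g := fun t : ℝ => |t| ^ q) (by simp [Real.zero_rpow hq0.ne'])

lemma gag_nonneg (N : ℕ) (p s : ℝ) (u : Euc N → ℝ) : 0 ≤ gag N p s u :=
  integral_nonneg fun z => by positivity

lemma poincare (N : ℕ) (hN : 0 < N) (p s : ℝ) (hp : 1 ≤ p) (hs0 : 0 < s) (hs1 : s < 1)
    (x0 : Euc N) (R : ℝ) : ∃ C : ℝ, 0 ≤ C ∧ ∀ ψ : Euc N → ℝ, TestOn (ball x0 R) ψ →
      ∫ x, |ψ x| ^ p ≤ C * gag N p s ψ := by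
  have hp0 : 0 < p := by linarith
  have : Nonempty (Fin N) := ⟨⟨0, hN⟩⟩
  obtain ⟨e, he⟩ := exists_norm_eq (Euc N) (c := |R| + 2) (by positivity)
  set A : Set (Euc N) := ball (x0 + e) 1 with hA
  set D : ℝ := 2 * |R| + 3 with hD
  have hD0 : 0 < D := by positivity
  have hA0 : 0 < volume.real A := by
    rw [Measure.real, ENNReal.toReal_pos_iff]
    exact ⟨measure_ball_pos _ _ one_pos, measure_ball_lt_top⟩
  set t : ℝ := (N : ℝ) + s * p with ht
  have ht0 : 0 ≤ t := by positivity
  refine ⟨D ^ t / volume.real A, by positivity, fun ψ hψ => ?_⟩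
  have hg := gag_int N hN p s hp hs0 hs1 ψ hψ.1 hψ.2.1
  have hi := rpow_int hp hψ.1.continuous hψ.2.1
  have hAi : Integrable (A.indicator (fun _ => (1 : ℝ))) := by
    rw [integrable_indicator_iff measurableSet_ball]
    exact integrableOn_const measure_ball_lt_top.ne
  have h1 : ∫ z : Euc N × Euc N, |ψ z.1| ^ p * A.indicator (fun _ => (1 : ℝ)) z.2 ≤
      ∫ z : Euc N × Euc N, D ^ t * (|ψ z.1 - ψ z.2| ^ p / ‖z.1 - z.2‖ ^ t) := by
    refine integral_mono (hi.mul_prod hAi) (hg.const_mul _) fun z => ?_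
    simp only
    by_cases h2 : z.2 ∈ A
    · by_cases h1 : z.1 ∈ ball x0 R
      · rw [indicator_of_mem h2, mul_one]
        rw [hA, mem_ball, dist_eq_norm] at h2
        rw [mem_ball, dist_eq_norm] at h1
        have hRR := le_abs_self R
        have b1 : |R| + 1 < ‖z.2 - x0‖ := by
          have := norm_sub_le (z.2 - x0) (z.2 - (x0 + e))
          rw [show z.2 - x0 - (z.2 - (x0 + e)) = e by abel, he] at this
          linarith
        have b2 : ‖z.2 - x0‖ ≤ |R| + 3 := by
          have := norm_add_le (z.2 - (x0 + e)) e
          rw [show z.2 - (x0 + e) + e = z.2 - x0 by abel, he] at this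
          linarith
        have b3 : ‖z.1 - z.2‖ ≤ D := by
          have := norm_sub_le (z.1 - x0) (z.2 - x0)
          rw [show z.1 - x0 - (z.2 - x0) = z.1 - z.2 by abel] at this
          linarith
        have b4 : 0 < ‖z.1 - z.2‖ := by
          rw [norm_pos_iff, sub_ne_zero]
          intro h
          rw [h] at h1
          linarith
        have b5 : ψ z.2 = 0 := by
          apply image_eq_zero_of_notMem_tsupport
          intro h
          have := hψ.2.2 h
          rw [mem_ball, dist_eq_norm] at this
          linarith
        rw [b5, sub_zero, mul_div_left_comm]
        apply le_mul_of_one_le_right (by positivity)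
        rw [one_le_div (by positivity)]
        exact Real.rpow_le_rpow b4.le b3 ht0
      · rw [image_eq_zero_of_notMem_tsupport (fun h => h1 (hψ.2.2 h)), abs_zero,
          Real.zero_rpow hp0.ne', zero_mul]
        positivity
    · rw [indicator_of_notMem h2, mul_zero]
      positivity
  rw [integral_const_mul] at h1
  have h2 := integral_prod_mul (μ := (volume : Measure (Euc N))) (ν := (volume : Measure (Euc N)))
    (fun x => |ψ x| ^ p) (A.indicator (fun _ => (1 : ℝ)))
  rw [← Measure.volume_eq_prod] at h2
  rw [h2, integral_indicator_const _ measurableSet_ball, smul_eq_mul, mul_one] at h1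
  rw [div_mul_eq_mul_div, le_div_iff₀ hA0]
  exact h1

lemma smoothTransition_lip : ∃ K : ℝ, 0 ≤ K ∧ ∀ x y : ℝ,
    |Real.smoothTransition x - Real.smoothTransition y| ≤ K * |x - y| := by
  set g : ℝ → ℝ := fun t => Real.smoothTransition t * Real.smoothTransition (3 - t) with hg
  have hgc : ContDiff ℝ 1 g := by
    apply ContDiff.mul
    · exact Real.smoothTransition.contDiff (n := 1)
    · exact (Real.smoothTransition.contDiff (n := 1)).comp (contDiff_const.sub contDiff_id)
  have hgs : HasCompactSupport g := by
    apply HasCompactSupport.intro (isCompact_Icc (a := (0 : ℝ)) (b := 3))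
    intro x hx
    simp only [hg]
    rw [mem_Icc, not_and_or, not_le, not_le] at hx
    rcases hx with hx | hx
    · rw [Real.smoothTransition.zero_of_nonpos hx.le, zero_mul]
    · rw [Real.smoothTransition.zero_of_nonpos (x := 3 - x) (by linarith), mul_zero]
  obtain ⟨K, hK⟩ := hgc.lipschitzWith_of_hasCompactSupport hgs (by simp)
  refine ⟨K, K.2, fun x y => ?_⟩
  have e : ∀ x : ℝ, Real.smoothTransition x = g (projIcc (0 : ℝ) 1 zero_le_one x) := by
    intro x
    simp only [hg]
    rw [Real.smoothTransition.projIcc, Real.smoothTransition.one_of_one_le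
      (x := 3 - (projIcc (0 : ℝ) 1 zero_le_one x : ℝ)), mul_one]
    have := (projIcc (0 : ℝ) 1 zero_le_one x).2.2
    linarith
  rw [e x, e y]
  have h1 := hK.dist_le_mul (projIcc (0 : ℝ) 1 zero_le_one x) (projIcc (0 : ℝ) 1 zero_le_one y)
  have h2 := (LipschitzWith.projIcc (zero_le_one' ℝ)).dist_le_mul x y
  rw [Subtype.dist_eq] at h2
  rw [Real.dist_eq] at h1
  refine h1.trans ?_
  apply mul_le_mul_of_nonneg_left _ K.2
  simpa [Real.dist_eq] using h2

end Concrete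

section Approx
open Topology Set

lemma cap_seq (N : ℕ) (p s : ℝ) (F : Set (Euc N)) (hF : IsCompact F)
    (x0 : Euc N) (R : ℝ) (hFB : F ⊆ ball x0 R) (hcap : fcap N p s F (ball x0 R) = 0) (ε : ℝ)
    (hε : 0 < ε) :
    ∃ φ : Euc N → ℝ, TestOn (ball x0 R) φ ∧ (∀ x ∈ F, 1 ≤ φ x) ∧ gag N p s φ < ε := by
  have hne : { c | ∃ φ : Euc N → ℝ, TestOn (ball x0 R) φ ∧ (∀ x ∈ F, 1 ≤ φ x) ∧
      c = gag N p s φ }.Nonempty := by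
    rcases le_or_gt R 0 with hR | hR
    · rw [ball_eq_empty.2 hR] at hFB
      refine ⟨_, fun _ => 0, ⟨contDiff_const, ?_, ?_⟩, fun x hx => absurd (hFB hx) (by simp), rfl⟩
      · exact HasCompactSupport.zero
      · simp [tsupport]
    · obtain ⟨r, hr, hFr⟩ := exists_pos_lt_subset_ball hR hF.isClosed hFB
      let b : ContDiffBump x0 := ⟨r, (r + R) / 2, hr.1, by linarith [hr.2]⟩
      refine ⟨_, b, ⟨b.contDiff, b.hasCompactSupport, ?_⟩, fun x hx => ?_, rfl⟩
      · rw [b.tsupport_eq]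
        exact closedBall_subset_ball (show (r + R) / 2 < R by linarith [hr.2])
      · exact (b.one_of_mem_closedBall (ball_subset_closedBall (hFr hx))).ge
  have : sInf { c | ∃ φ : Euc N → ℝ, TestOn (ball x0 R) φ ∧ (∀ x ∈ F, 1 ≤ φ x) ∧
      c = gag N p s φ } < ε := by
    rw [show sInf _ = (0 : ℝ) from hcap]; exact hε
  obtain ⟨c, ⟨φ, h1, h2, h3⟩, hc⟩ := exists_lt_of_csInf_lt hne this
  exact ⟨φ, h1, h2, h3 ▸ hc⟩

lemma psi_seq (N : ℕ) (hN : 0 < N) (p s : ℝ) (hp : 1 ≤ p) (hs0 : 0 < s) (hs1 : s < 1)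
    (F : Set (Euc N)) (hF : IsCompact F)
    (x0 : Euc N) (R : ℝ) (hFB : F ⊆ ball x0 R) (hcap : fcap N p s F (ball x0 R) = 0) :
    ∃ ψ : ℕ → Euc N → ℝ, (∀ k, TestOn (ball x0 R) (ψ k)) ∧ (∀ k x, 0 ≤ ψ k x) ∧
      (∀ k x, ψ k x ≤ 1) ∧ (∀ k, ∀ x ∈ F, ∀ᶠ y in 𝓝 x, ψ k y = 1) ∧
      Tendsto (fun k => gag N p s (ψ k)) atTop (𝓝 0) ∧
      ∀ᵐ x, Tendsto (fun k => ψ k x) atTop (𝓝 0) := by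
  have hp0 : 0 < p := by linarith
  obtain ⟨K, hK0, hK⟩ := smoothTransition_lip
  choose φ hφT hφ1 hφg using fun k : ℕ => cap_seq N p s F hF x0 R hFB hcap (1 / ((k : ℝ) + 1))
    (by positivity)
  set ψ : ℕ → Euc N → ℝ := fun k x => Real.smoothTransition (2 * φ k x) with hψ
  have hT : ∀ k, TestOn (ball x0 R) (ψ k) := by
    intro k
    have hsub : tsupport (ψ k) ⊆ tsupport (φ k) :=
      tsupport_comp_subset (g := fun t : ℝ => Real.smoothTransition (2 * t)) (by simp) (φ k)
    refine ⟨?_, ?_, hsub.trans (hφT k).2.2⟩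
    · exact (Real.smoothTransition.contDiff (n := ⊤)).comp (contDiff_const.mul (hφT k).1)
    · exact (hφT k).2.1.of_isClosed_subset (isClosed_tsupport _) hsub
  have hg : ∀ k, gag N p s (ψ k) ≤ (2 * K) ^ p * (1 / ((k : ℝ) + 1)) := by
    intro k
    have h1 : gag N p s (ψ k) ≤ (2 * K) ^ p * gag N p s (φ k) := by
      unfold gag
      rw [← integral_const_mul]
      refine integral_mono (gag_int N hN p s hp hs0 hs1 _ (hT k).1 (hT k).2.1)
        ((gag_int N hN p s hp hs0 hs1 _ (hφT k).1 (hφT k).2.1).const_mul _) fun z => ?_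
      simp only
      rw [← mul_div_assoc, ← Real.mul_rpow (by positivity) (abs_nonneg _)]
      gcongr
      refine (hK _ _).trans (le_of_eq ?_)
      rw [← mul_sub, abs_mul, abs_two]; ring
    refine h1.trans ?_
    gcongr
    exact (hφg k).le
  have hgt : Tendsto (fun k => gag N p s (ψ k)) atTop (𝓝 0) := by
    refine squeeze_zero (fun k => gag_nonneg _ _ _ _) hg ?_
    simpa using tendsto_one_div_add_atTop_nhds_zero_nat.const_mul ((2 * K) ^ p)
  obtain ⟨C, hC0, hC⟩ := poincare N hN p s hp hs0 hs1 x0 R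
  have hLp : Tendsto (fun k => ∫ x, |ψ k x| ^ p) atTop (𝓝 0) := by
    refine squeeze_zero (fun k => integral_nonneg fun x => by positivity) (fun k => hC _ (hT k)) ?_
    simpa using hgt.const_mul C
  obtain ⟨ns, hns, hae⟩ := subseq_ae hp
    (fun k => rpow_int hp (hT k).1.continuous (hT k).2.1) hLp
  refine ⟨fun k => ψ (ns k), fun k => hT _, fun k x => Real.smoothTransition.nonneg _,
    fun k x => Real.smoothTransition.le_one _, fun k x hx => ?_, hgt.comp hns.tendsto_atTop, hae⟩
  have h1 : ∀ᶠ y in 𝓝 x, 1 / 2 < φ (ns k) y :=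
    (hφT (ns k)).1.continuous.continuousAt.eventually
      (lt_mem_nhds (by linarith [hφ1 (ns k) x hx]))
  filter_upwards [h1] with y hy
  exact Real.smoothTransition.one_of_one_le (by linarith)

lemma approx (N : ℕ) (hN : 0 < N) (p s : ℝ) (hp : 1 ≤ p) (hs0 : 0 < s) (hs1 : s < 1)
    (E F : Set (Euc N)) (hF : IsCompact F)
    (x0 : Euc N) (R : ℝ) (hFB : F ⊆ ball x0 R) (hcap : fcap N p s F (ball x0 R) = 0)
    (u : Euc N → ℝ) (hu : TestOn E u) :
    ∃ w : ℕ → Euc N → ℝ, (∀ k, TestOn (E \ F) (w k)) ∧ (∀ k x, |w k x| ≤ |u x|) ∧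
      (∀ᵐ x, Tendsto (fun k => w k x) atTop (𝓝 (u x))) ∧
      (∀ k, Integrable (fun x => |w k x - u x| ^ p)) ∧
      Tendsto (fun k => ∫ x, |w k x - u x| ^ p) atTop (𝓝 0) ∧
      (∀ k, Integrable (fun z : Euc N × Euc N =>
        |(w k z.1 - u z.1) - (w k z.2 - u z.2)| ^ p / ‖z.1 - z.2‖ ^ ((N : ℝ) + s * p))) ∧
      Tendsto (fun k => gag N p s (fun x => w k x - u x)) atTop (𝓝 0) := by
  have hp0 : 0 < p := by linarith
  obtain ⟨ψ, hT, h0, h1, hnear, hgt, hae⟩ := psi_seq N hN p s hp hs0 hs1 F hF x0 R hFB hcap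
  set w : ℕ → Euc N → ℝ := fun k x => u x * (1 - ψ k x) with hw
  have hwsm : ∀ k, ContDiff ℝ (⊤ : ℕ∞) (w k) := fun k =>
    hu.1.mul (contDiff_const.sub (hT k).1)
  have hsub : ∀ k, tsupport (w k) ⊆ tsupport u := fun k => tsupport_mul_subset_left
  have hwT : ∀ k, TestOn (E \ F) (w k) := by
    intro k
    refine ⟨hwsm k, hu.2.1.of_isClosed_subset (isClosed_tsupport _) (hsub k), fun x hx =>
      ⟨hu.2.2 (hsub k hx), fun hxF => ?_⟩⟩
    refine (notMem_tsupport_iff_eventuallyEq.2 ?_) hx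
    filter_upwards [hnear k x hxF] with y hy
    simp [hw, hy]
  have hdsm : ∀ k, ContDiff ℝ (⊤ : ℕ∞) (fun x => w k x - u x) := fun k => (hwsm k).sub hu.1
  have hdc : ∀ k, HasCompactSupport (fun x => w k x - u x) := fun k => (hwT k).2.1.sub hu.2.1
  have hd : ∀ k x, w k x - u x = - (u x * ψ k x) := fun k x => by simp only [hw]; ring
  have hdle : ∀ k x, |w k x - u x| ≤ |u x| := fun k x => by
    rw [hd, abs_neg, abs_mul, abs_of_nonneg (h0 k x)]
    exact mul_le_of_le_one_right (abs_nonneg _) (h1 k x)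
  have hwae : ∀ᵐ x, Tendsto (fun k => w k x) atTop (𝓝 (u x)) := by
    filter_upwards [hae] with x hx
    simpa using ((hx.const_sub 1).const_mul (u x))
  have hgi := fun k => gag_int N hN p s hp hs0 hs1 _ (hdsm k) (hdc k)
  refine ⟨w, hwT, fun k x => ?_, hwae, fun k => rpow_int hp (hdsm k).continuous (hdc k), ?_,
    hgi, ?_⟩
  · simp only [hw]
    rw [abs_mul]
    apply mul_le_of_le_one_right (abs_nonneg _)
    rw [abs_le]; constructor <;> linarith [h0 k x, h1 k x]
  · have := tendsto_integral_of_dominated_convergence (μ := (volume : Measure (Euc N)))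
      (F := fun k x => |w k x - u x| ^ p) (f := fun _ => (0 : ℝ)) (fun x => |u x| ^ p)
      (fun k => (rpow_int hp (hdsm k).continuous (hdc k)).aestronglyMeasurable)
      (rpow_int hp hu.1.continuous hu.2.1)
      (fun k => Eventually.of_forall fun x => by
        rw [Real.norm_of_nonneg (by positivity)]
        exact Real.rpow_le_rpow (abs_nonneg _) (hdle k x) hp0.le)
      (by
        filter_upwards [hwae] with x hx
        have := ((hx.sub_const (u x)).abs).rpow_const (p := p) (Or.inr hp0.le)
        simpa [Real.zero_rpow hp0.ne'] using this)
    simpa using this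
  · obtain ⟨M, hM⟩ := hu.2.1.exists_bound_of_continuous hu.1.continuous
    have hM0 : 0 ≤ M := (norm_nonneg _).trans (hM 0)
    have hui := gag_int N hN p s hp hs0 hs1 _ hu.1 hu.2.1
    have hψi := fun k => gag_int N hN p s hp hs0 hs1 _ (hT k).1 (hT k).2.1
    set t : ℝ := (N : ℝ) + s * p with ht
    set G : ℕ → Euc N × Euc N → ℝ := fun k z =>
      |ψ k z.2| ^ p * (|u z.1 - u z.2| ^ p / ‖z.1 - z.2‖ ^ t) with hG
    have hGm : ∀ k, AEStronglyMeasurable (G k) := by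
      intro k
      have a1 := (hT k).1.continuous
      have a2 := hu.1.continuous
      exact Measurable.aestronglyMeasurable (by simp only [hG]; fun_prop)
    have hGle : ∀ k z, ‖G k z‖ ≤ |u z.1 - u z.2| ^ p / ‖z.1 - z.2‖ ^ t := by
      intro k z
      simp only [hG]
      rw [Real.norm_of_nonneg (by positivity)]
      apply mul_le_of_le_one_left (by positivity)
      apply Real.rpow_le_one (abs_nonneg _) _ hp0.le
      rw [abs_of_nonneg (h0 _ _)]; exact h1 _ _
    have hGi : ∀ k, Integrable (G k) := fun k =>
      hui.mono' (hGm k) (Eventually.of_forall (hGle k))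
    have hGt : Tendsto (fun k => ∫ z, G k z) atTop (𝓝 0) := by
      have := tendsto_integral_of_dominated_convergence
        (F := G) (f := fun _ => (0 : ℝ)) _ hGm hui
        (fun k => Eventually.of_forall (hGle k))
        (by
          have hq := (Measure.quasiMeasurePreserving_snd
            (μ := (volume : Measure (Euc N))) (ν := (volume : Measure (Euc N)))).ae hae
          filter_upwards [hq] with z hz
          have := (hz.abs.rpow_const (p := p) (Or.inr hp0.le)).mul_const
            (|u z.1 - u z.2| ^ p / ‖z.1 - z.2‖ ^ t)
          simpa [Real.zero_rpow hp0.ne'] using this)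
      simpa using this
    have hbound : ∀ k, gag N p s (fun x => w k x - u x) ≤
        2 ^ p * (M ^ p * gag N p s (ψ k) + ∫ z, G k z) := by
      intro k
      unfold gag
      rw [← integral_const_mul, ← integral_add ((hψi k).const_mul _) (hGi k),
        ← integral_const_mul]
      refine integral_mono (hgi k) ((((hψi k).const_mul _).add (hGi k)).const_mul _) fun z => ?_
      simp only [hG]
      have e : |(w k z.1 - u z.1) - (w k z.2 - u z.2)| ≤
          M * |ψ k z.1 - ψ k z.2| + |ψ k z.2| * |u z.1 - u z.2| := by
        rw [hd, hd]
        have : -(u z.1 * ψ k z.1) - -(u z.2 * ψ k z.2) =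
          -(u z.1 * (ψ k z.1 - ψ k z.2) + ψ k z.2 * (u z.1 - u z.2)) := by ring
        rw [this, abs_neg]
        refine (abs_add_le _ _).trans ?_
        rw [abs_mul, abs_mul]
        gcongr
        exact hM z.1
      have e2 := (Real.rpow_le_rpow (abs_nonneg _) e hp0.le).trans
        (add_rpow_le_two hp (by positivity) (by positivity))
      rw [Real.mul_rpow hM0 (abs_nonneg _), Real.mul_rpow (abs_nonneg _) (abs_nonneg _)] at e2
      calc _ ≤ (2 ^ p * (M ^ p * |ψ k z.1 - ψ k z.2| ^ p + |ψ k z.2| ^ p * |u z.1 - u z.2| ^ p)) /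
            ‖z.1 - z.2‖ ^ t := by gcongr
        _ = _ := by ring
    refine squeeze_zero (fun k => gag_nonneg _ _ _ _) hbound ?_
    simpa using ((hgt.const_mul (M ^ p)).add hGt).const_mul (2 ^ p)

/-- Normalized difference quotient, so that `gag` is an `L^p` integral. -/
noncomputable def KK (N : ℕ) (p s : ℝ) (u : Euc N → ℝ) (z : Euc N × Euc N) : ℝ :=
  (u z.1 - u z.2) / ‖z.1 - z.2‖ ^ (((N : ℝ) + s * p) / p)

lemma KK_rpow (N : ℕ) (p s : ℝ) (hp : 1 ≤ p) (u : Euc N → ℝ) (z : Euc N × Euc N) :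
    |KK N p s u z| ^ p = |u z.1 - u z.2| ^ p / ‖z.1 - z.2‖ ^ ((N : ℝ) + s * p) := by
  unfold KK
  rw [abs_div, abs_of_nonneg (Real.rpow_nonneg (norm_nonneg _) _), Real.div_rpow (abs_nonneg _)
    (Real.rpow_nonneg (norm_nonneg _) _), ← Real.rpow_mul (norm_nonneg _),
    div_mul_cancel₀ _ (by linarith)]

lemma KK_sub (N : ℕ) (p s : ℝ) (u v : Euc N → ℝ) (z : Euc N × Euc N) :
    KK N p s u z - KK N p s v z = KK N p s (fun x => u x - v x) z := by
  unfold KK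
  rw [← sub_div]
  congr 1; ring

lemma gag_usc (N : ℕ) (p s : ℝ) (hp : 1 ≤ p) (w : ℕ → Euc N → ℝ) (u V : Euc N → ℝ)
    (hi : ∀ k, Integrable (fun z : Euc N × Euc N =>
        |(w k z.1 - u z.1) - (w k z.2 - u z.2)| ^ p / ‖z.1 - z.2‖ ^ ((N : ℝ) + s * p)))
    (hl : Tendsto (fun k => gag N p s (fun x => w k x - u x)) atTop (𝓝 0)) (ε : ℝ) (hε : 0 < ε) :
    ∀ᶠ k in atTop, gag N p s (fun x => w k x - V x) ≤ gag N p s (fun x => u x - V x) + ε := by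
  have := usc_lem (μ := (volume : Measure (Euc N × Euc N))) hp (fun k => KK N p s (w k))
    (KK N p s u) (KK N p s V)
    (by simpa only [KK_sub, KK_rpow N p s hp, gag] using hi)
    (by simpa only [KK_sub, KK_rpow N p s hp, gag] using hl) ε hε
  simpa only [KK_sub, KK_rpow N p s hp, gag] using this

end Approx

section Main
open Topology Set

lemma TestOn.mono' {N : ℕ} {A B : Set (Euc N)} (h : A ⊆ B) {u : Euc N → ℝ} (hu : TestOn A u) :
    TestOn B u := ⟨hu.1, hu.2.1, hu.2.2.trans h⟩

lemma TestOn.setInt {N : ℕ} {A : Set (Euc N)} {u : Euc N → ℝ} (hu : TestOn A u) {q : ℝ}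
    (hq : 1 ≤ q) : ∫ x in A, |u x| ^ q = ∫ x, |u x| ^ q := by
  apply setIntegral_eq_integral_of_forall_compl_eq_zero
  intro x hx
  rw [image_eq_zero_of_notMem_tsupport (fun h => hx (hu.2.2 h)), abs_zero,
    Real.zero_rpow (by linarith)]

lemma gag_const_mul (N : ℕ) (p s a : ℝ) (ha : 0 ≤ a) (u : Euc N → ℝ) :
    gag N p s (fun x => a * u x) = a ^ p * gag N p s u := by
  unfold gag
  rw [← integral_const_mul]
  congr 1
  ext z
  rw [← mul_sub, abs_mul, abs_of_nonneg ha, Real.mul_rpow ha (abs_nonneg _), mul_div_assoc]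

lemma mem_approx (N : ℕ) (hN : 0 < N) (p s : ℝ) (hp : 1 ≤ p) (hs0 : 0 < s) (hs1 : s < 1)
    (E F : Set (Euc N)) (hF : IsCompact F)
    (x0 : Euc N) (R : ℝ) (hFB : F ⊆ ball x0 R) (hcap : fcap N p s F (ball x0 R) = 0)
    (V : Euc N → ℝ) (hV : MemW0 N p s E V) : MemW0 N p s (E \ F) V := by
  obtain ⟨u, hu, hl⟩ := hV
  have key : ∀ n : ℕ, ∃ w : Euc N → ℝ, TestOn (E \ F) w ∧
      (∫ x, |w x - V x| ^ p) + gag N p s (fun x => w x - V x) ≤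
      ((∫ x, |u n x - V x| ^ p) + gag N p s (fun x => u n x - V x)) + 2 * (1 / ((n : ℝ) + 1)) := by
    intro n
    obtain ⟨w, hT, -, -, hi, hlp, hgi, hgl⟩ :=
      approx N hN p s hp hs0 hs1 E F hF x0 R hFB hcap (u n) (hu n)
    have hε : 0 < 1 / ((n : ℝ) + 1) := by positivity
    obtain ⟨k, h1, h2⟩ := ((usc_lem hp w (u n) V hi hlp _ hε).and
      (gag_usc N p s hp w (u n) V hgi hgl _ hε)).exists
    exact ⟨w k, hT k, by linarith⟩
  choose w hT hle using key
  refine ⟨w, hT, squeeze_zero (fun n => ?_) hle ?_⟩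
  · exact add_nonneg (integral_nonneg fun x => by positivity) (gag_nonneg _ _ _ _)
  · simpa using hl.add (tendsto_one_div_add_atTop_nhds_zero_nat.const_mul 2)

lemma lam_approx (N : ℕ) (hN : 0 < N) (p s : ℝ) (hp : 1 ≤ p) (hs0 : 0 < s) (hs1 : s < 1)
    (E F : Set (Euc N)) (hF : IsCompact F)
    (x0 : Euc N) (R : ℝ) (hFB : F ⊆ ball x0 R) (hcap : fcap N p s F (ball x0 R) = 0)
    (q : ℝ) (hq : 1 ≤ q) (u : Euc N → ℝ) (hu : TestOn E u) (hu1 : ∫ x in E, |u x| ^ q = 1)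
    (ε : ℝ) (hε : 0 < ε) :
    ∃ v, TestOn (E \ F) v ∧ (∫ x in E \ F, |v x| ^ q) = 1 ∧ gag N p s v ≤ gag N p s u + 2 * ε := by
  have hp0 : 0 < p := by linarith
  have hq0 : 0 < q := by linarith
  obtain ⟨w, hT, hle, hae, hi, hlp, hgi, hgl⟩ :=
      approx N hN p s hp hs0 hs1 E F hF x0 R hFB hcap u hu
  rw [hu.setInt hq] at hu1
  set c : ℕ → ℝ := fun k => ∫ x, |w k x| ^ q with hc
  have hct : Tendsto c atTop (𝓝 1) := by
    rw [← hu1]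
    refine tendsto_integral_of_dominated_convergence (fun x => |u x| ^ q)
      (fun k => (rpow_int hq (hT k).1.continuous (hT k).2.1).aestronglyMeasurable)
      (rpow_int hq hu.1.continuous hu.2.1)
      (fun k => Eventually.of_forall fun x => ?_) ?_
    · rw [Real.norm_of_nonneg (by positivity)]
      exact Real.rpow_le_rpow (abs_nonneg _) (hle k x) hq0.le
    · filter_upwards [hae] with x hx
      exact hx.abs.rpow_const (Or.inr hq0.le)
  set A := gag N p s u + ε with hA
  have h1 : Tendsto (fun k => ((c k) ^ (-1 / q)) ^ p * A) atTop (𝓝 A) := by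
    have := ((hct.rpow_const (p := -1 / q) (Or.inl one_ne_zero)).rpow_const (p := p)
      (Or.inr hp0.le)).mul_const A
    simpa using this
  have h2 := gag_usc N p s hp w u (fun _ => 0) hgi hgl ε hε
  simp only [sub_zero] at h2
  obtain ⟨k, hk1, hk2, hk3⟩ := ((h1.eventually (gt_mem_nhds (by linarith : A < A + ε))).and
    (h2.and (hct.eventually (lt_mem_nhds one_pos)))).exists
  have hb : 0 ≤ (c k) ^ (-1 / q) := Real.rpow_nonneg hk3.le _
  have hvT : TestOn (E \ F) (fun x => (c k) ^ (-1 / q) * w k x) := by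
    have hs : tsupport (fun x => (c k) ^ (-1 / q) * w k x) ⊆ tsupport (w k) :=
      tsupport_mul_subset_right
    exact ⟨contDiff_const.mul (hT k).1, (hT k).2.1.of_isClosed_subset (isClosed_tsupport _) hs,
      hs.trans (hT k).2.2⟩
  refine ⟨fun x => (c k) ^ (-1 / q) * w k x, hvT, ?_, ?_⟩
  · rw [hvT.setInt hq]
    have : ∀ x, |(c k) ^ (-1 / q) * w k x| ^ q = (c k)⁻¹ * |w k x| ^ q := by
      intro x
      rw [abs_mul, abs_of_nonneg hb, Real.mul_rpow hb (abs_nonneg _), ← Real.rpow_mul hk3.le,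
        div_mul_cancel₀ _ hq0.ne', Real.rpow_neg_one]
    simp only [this]
    rw [integral_const_mul]
    exact inv_mul_cancel₀ hk3.ne'
  · rw [gag_const_mul _ _ _ _ hb]
    calc ((c k) ^ (-1 / q)) ^ p * gag N p s (w k) ≤ ((c k) ^ (-1 / q)) ^ p * A := by
          gcongr
      _ ≤ gag N p s u + 2 * ε := by linarith

end Main

theorem stmt17 (N : ℕ) (hN : 0 < N) (p s γ : ℝ) (hp : 1 ≤ p) (hs0 : 0 < s) (hs1 : s < 1)
    (hγ0 : 0 < γ) (hγ1 : γ < 1)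
    (E : Set (Euc N)) (hE : IsOpen E) (hEb : Bornology.IsBounded E)
    (F : Set (Euc N)) (hF : IsCompact F) (hFE : F ⊆ E)
    (x0 : Euc N) (R : ℝ) (hFB : F ⊆ ball x0 R)
    (hcap : fcap N p s F (ball x0 R) = 0) :
    {V : Euc N → ℝ | MemW0 N p s (E \ F) V} = {V : Euc N → ℝ | MemW0 N p s E V} ∧
    ∀ q : ℝ, 1 ≤ q → (s * p < N → q ≤ N * p / (N - s * p)) →
      lam N p q s E = lam N p q s (E \ F) := by
  refine ⟨Set.Subset.antisymm ?_ ?_, ?_⟩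
  · rintro V ⟨u, hu, hl⟩
    exact ⟨u, fun n => (hu n).mono' Set.sdiff_subset, hl⟩
  · intro V hV
    exact mem_approx N hN p s hp hs0 hs1 E F hF x0 R hFB hcap V hV
  · intro q hq _
    unfold lam
    set S := { c | ∃ u : Euc N → ℝ, TestOn E u ∧ (∫ x in E, |u x| ^ q) = 1 ∧ c = gag N p s u }
      with hS
    set S' := { c | ∃ u : Euc N → ℝ, TestOn (E \ F) u ∧ (∫ x in E \ F, |u x| ^ q) = 1 ∧
      c = gag N p s u } with hS'
    have hsub : S' ⊆ S := by
      rintro c ⟨u, hu, hu1, rfl⟩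
      refine ⟨u, hu.mono' Set.sdiff_subset, ?_, rfl⟩
      rw [(hu.mono' Set.sdiff_subset).setInt hq, ← hu.setInt hq, hu1]
    have hbdd : ∀ T : Set ℝ, T ⊆ S → BddBelow T := fun T hT => ⟨0, fun c hc => by
      obtain ⟨u, -, -, rfl⟩ := hT hc
      exact gag_nonneg _ _ _ _⟩
    have key : ∀ c ∈ S, ∀ ε : ℝ, 0 < ε → ∃ c' ∈ S', c' ≤ c + 2 * ε := by
      rintro c ⟨u, hu, hu1, rfl⟩ ε hε
      obtain ⟨v, hv, hv1, hv2⟩ := lam_approx N hN p s hp hs0 hs1 E F hF x0 R hFB hcap q hq u hu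
        hu1 ε hε
      exact ⟨_, ⟨v, hv, hv1, rfl⟩, hv2⟩
    rcases S.eq_empty_or_nonempty with h | h
    · rw [h, Set.subset_empty_iff.1 (hsub.trans h.subset)]
    · obtain ⟨c0, hc0⟩ := h
      obtain ⟨c1, hc1, -⟩ := key c0 hc0 1 one_pos
      apply le_antisymm
      · exact csInf_le_csInf (hbdd S subset_rfl) ⟨c1, hc1⟩ hsub
      · refine le_csInf ⟨c0, hc0⟩ fun c hc => le_of_forall_pos_le_add fun ε hε => ?_
        obtain ⟨c', hc', hle⟩ := key c hc (ε / 2) (by positivity)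
        have := csInf_le (hbdd S' hsub) hc'
        linarith
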